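/- Let (M, H) be a sufficiently saturated H-structure and let φ(x, z, ā) be an L-formula with parameters ā such that for every c ∈ M the formula φ(x, c, ā) is algebraic (has only finitely many solutions in x). Then the L-formula ∃z φ(x, z, ā) is non-algebraic if and only if the L_H-formula ∃z ∈ H φ(x, z, ā) is non-algebraic. -/

import Mathlib

/-!
The heart of the matter is that `H` meets every infinite definable set: by saturation such a set
has a point that is not algebraic over its finitely many parameters, and by density the type of
this point is realized in `H`.

If only finitely many `x`, forming a set `Y`, satisfy `φ(x, z)` for some `z ∈ H`, then the definable
set of those `z` with `φ(x, z)` for some `x ∉ Y` misses `H`, so it is finite. As each `z` is matched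
with finitely many `x`, there are finitely many `x ∉ Y` with `∃ z, φ(x, z)`, hence finitely many
altogether.
-/

open FirstOrder

namespace HPaper

universe u v w

variable {M : Type w} (L : FirstOrder.Language.{u, v}) [L.Structure M]


/-- `x` is (model-theoretically) algebraic over the parameter set `A`:
it satisfies a formula with parameters in `A` having finitely many solutions. -/
def acl (A : Set M) : Set M :=
  {x : M | ∃ φ : (L.withConstants A).Formula (Fin 1),
      {y : M | φ.Realize (fun _ => y)}.Finite ∧ φ.Realize (fun _ => x)}

/-- Two tuples have the same `L`-type over the parameter set `A`. -/
def SameType (A : Set M) {α : Type*} (a b : α → M) : Prop :=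
  ∀ φ : (L.withConstants A).Formula α, φ.Realize a ↔ φ.Realize b

/-- The (algebraic-closure) dimension of a finite tuple over a base set: the least
cardinality of a subtuple over which (together with the base) the whole tuple is algebraic. -/
noncomputable def dim {α : Type*} [Fintype α] (a : α → M) (B : Set M) : ℕ :=
  sInf {k : ℕ | ∃ s : Finset α, s.card = k ∧ ∀ i, a i ∈ acl L (B ∪ (a '' ↑s))}

/-- The tuple `a` is algebraically independent from `C` over `B`. -/
def Indep {α : Type*} [Fintype α] (a : α → M) (B C : Set M) : Prop :=
  dim L a (B ∪ C) = dim L a B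

/-- The set `A` is algebraically independent from `C` over `B`. -/
def SetIndep (A B C : Set M) : Prop :=
  ∀ (n : ℕ) (a : Fin n → M), (∀ i, a i ∈ A) → Indep L a B C

/-- `A` is `H`-independent: `A` is independent from `H` over `A ∩ H`. -/
def HIndepSet (H A : Set M) : Prop :=
  SetIndep L A (A ∩ H) H

/-- A tuple is `H`-independent. -/
def HIndepTuple (H : Set M) {α : Type*} [Fintype α] (a : α → M) : Prop :=
  Indep L a (Set.range a ∩ H) H

/-- `A` has finite dimension. -/
def FinDim (A : Set M) : Prop :=
  ∃ s : Finset M, A ⊆ acl L ↑s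

/-- The exchange property for algebraic closure. -/
def Exchange (L' : FirstOrder.Language.{u, v}) (N : Type w) [L'.Structure N] : Prop :=
  ∀ (A : Set N) (a b : N), a ∈ acl L' (A ∪ {b}) → a ∉ acl L' A → b ∈ acl L' (A ∪ {a})

/-- Uniform elimination of the quantifier `∃^∞` in the structure `N`. -/
def ElimInfty (L' : FirstOrder.Language.{u, v}) (N : Type w) [L'.Structure N] : Prop :=
  ∀ (q : ℕ) (φ : L'.Formula (Fin 1 ⊕ Fin q)), ∃ Nb : ℕ, ∀ v : Fin q → N,
    {x : N | φ.Realize (Sum.elim (fun _ => x) v)}.Finite →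
      {x : N | φ.Realize (Sum.elim (fun _ => x) v)}.ncard ≤ Nb

/-- `N` is a geometric structure: acl satisfies exchange and `∃^∞` is eliminated. -/
def Geometric (L' : FirstOrder.Language.{u, v}) (N : Type w) [L'.Structure N] : Prop :=
  Exchange L' N ∧ ElimInfty L' N

/-- The density property of the pair `(M, H)`. -/
def DensityProp (H : Set M) : Prop :=
  ∀ A : Set M, FinDim L A → ∀ a : M, a ∉ acl L A →
    ∃ h ∈ H, SameType L A (fun _ : Fin 1 => a) (fun _ => h)

/-- The extension property of the pair `(M, H)`. -/
def ExtensionProp (H : Set M) : Prop :=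
  ∀ A : Set M, FinDim L A → ∀ a : M, a ∉ acl L A →
    ∃ b : M, b ∉ acl L (A ∪ H) ∧ SameType L A (fun _ : Fin 1 => a) (fun _ => b)

/-- `H` is an algebraically independent set. -/
def AclIndepSet (H : Set M) : Prop :=
  ∀ h ∈ H, h ∉ acl L (H \ {h})

/-- `(M, H)` is an `H`-structure. -/
def IsHStructure (H : Set M) : Prop :=
  DensityProp L H ∧ ExtensionProp L H ∧ AclIndepSet L H

/-- `h` enumerates an `H`-basis of the tuple `a` over the set `A`: a minimal-length tuple of
distinct elements of `H` such that `a⌢h` is independent from `H` over `A`. -/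
def IsHBasis (H : Set M) (A : Set M) {α : Type*} [Fintype α] {k : ℕ}
    (a : α → M) (h : Fin k → M) : Prop :=
  (∀ i, h i ∈ H) ∧ Function.Injective h ∧ Indep L (Sum.elim a h) A H ∧
    ∀ (k' : ℕ) (h' : Fin k' → M), (∀ i, h' i ∈ H) → Indep L (Sum.elim a h') A H → k ≤ k'

/-- Countable saturation (a rendering of "sufficiently saturated", adequate for
the countably-many-parameters arguments in the paper). -/
def CountSaturated (L' : FirstOrder.Language.{u, v}) (N : Type w) [L'.Structure N] : Prop :=
  ∀ (A : Set N), A.Countable → ∀ (n : ℕ)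
    (S : Set ((L'.withConstants A).Formula (Fin n))),
    (∀ F : Finset ((L'.withConstants A).Formula (Fin n)), ↑F ⊆ S →
      ∃ a : Fin n → N, ∀ φ ∈ F, φ.Realize a) →
    ∃ a : Fin n → N, ∀ φ ∈ S, φ.Realize a

/-- The theory of `M` is nowhere trivial. -/
def NowhereTrivial (L' : FirstOrder.Language.{u, v}) (N : Type w) [L'.Structure N] : Prop :=
  ∀ (A : Set N), A.Countable → ∀ a : N, a ∉ acl L' A →
    ∃ (m k : ℕ) (b : Fin m → N) (c : Fin k → N),
      Indep L' (fun _ : Fin 1 => a) A (Set.range b) ∧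
      Indep L' (fun _ : Fin 1 => a) A (Set.range c) ∧
      a ∈ acl L' ((A ∪ Set.range b) ∪ Set.range c)



/-- The formula `φ(x̄, b̄)` divides over `A`: there is an `A`-indiscernible sequence of
tuples, each with the same type as `b̄` over `A`, along which the instances of `φ` are
`k`-inconsistent. -/
def FormulaDivides {α : Type*} {m : ℕ} (φ : L.Formula (α ⊕ Fin m))
    (b : Fin m → M) (A : Set M) : Prop :=
  ∃ (bs : ℕ → Fin m → M) (k : ℕ), 0 < k ∧
    (∀ i, SameType L A (bs i) b) ∧
    (∀ (l : ℕ) (f g : Fin l → ℕ), StrictMono f → StrictMono g →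
      SameType L A (fun p : Fin l × Fin m => bs (f p.1) p.2)
        (fun p : Fin l × Fin m => bs (g p.1) p.2)) ∧
    (∀ s : Finset ℕ, s.card = k → ¬ ∃ x : α → M, ∀ i ∈ s, φ.Realize (Sum.elim x (bs i)))

/-- The formula `φ(x̄, b̄)` forks over `A`: it implies a finite disjunction of formulas,
each of which divides over `A`. -/
def FormulaForks {α : Type*} {m : ℕ} (φ : L.Formula (α ⊕ Fin m))
    (b : Fin m → M) (A : Set M) : Prop :=
  ∃ (N : ℕ) (m' : Fin N → ℕ) (ψ : ∀ j, L.Formula (α ⊕ Fin (m' j)))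
    (c : ∀ j, Fin (m' j) → M),
    (∀ j, FormulaDivides L (ψ j) (c j) A) ∧
    ∀ x : α → M, φ.Realize (Sum.elim x b) → ∃ j, (ψ j).Realize (Sum.elim x (c j))

/-- The type of `ā` over `B` forks over `A`. -/
def TypeForks {α : Type*} (a : α → M) (B A : Set M) : Prop :=
  ∃ (m : ℕ) (φ : L.Formula (α ⊕ Fin m)) (b : Fin m → M),
    (∀ i, b i ∈ B) ∧ φ.Realize (Sum.elim a b) ∧ FormulaForks L φ b A

/-- `SUge L a A α` : the `SU`-rank of `tp(ā/A)` is at least `α`. -/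
noncomputable def SUge {α' : Type*} (a : α' → M) (o : Ordinal.{0}) (A : Set M) : Prop :=
  Ordinal.lt_wf.fix (C := fun _ => Set M → Prop)
    (fun o ih A => ∀ β (h : β < o), ∃ B : Set M, A ⊆ B ∧ TypeForks L a B A ∧ ih β h B) o A

/-- The `SU`-rank of `tp(ā/A)`, as an ordinal (assuming it is ordinal-valued). -/
noncomputable def SU {α' : Type*} (a : α' → M) (A : Set M) : Ordinal.{0} :=
  sSup {o : Ordinal | SUge L a o A}

/-- `T` has `SU`-rank one: every non-algebraic `1`-type has `SU`-rank `1`. -/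
def SURankOne (L' : FirstOrder.Language.{u, v}) (N : Type w) [L'.Structure N] : Prop :=
  (∀ (a : N) (A : Set N), a ∈ acl L' A → SU L' (fun _ : Fin 1 => a) A = 0) ∧
  (∀ (a : N) (A : Set N), a ∉ acl L' A → SU L' (fun _ : Fin 1 => a) A = 1)

/-- The `SU`-rank of the (type-)definable set `X` over `A` equals `o` (and is attained). -/
def SUSetEq {α' : Type*} (X : Set (α' → M)) (A : Set M) (o : Ordinal.{0}) : Prop :=
  (∀ a ∈ X, SU L a A ≤ o) ∧ ∃ a ∈ X, SU L a A = o

/-- The `SU`-rank of the set `X` over `A` is (strictly) less than `o`. -/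
def SUSetLt {α' : Type*} (X : Set (α' → M)) (A : Set M) (o : Ordinal.{0}) : Prop :=
  ∀ a ∈ X, SU L a A < o

/-- Shorthand for the ordinal `ω·n + k`. -/
noncomputable def wnk (n k : ℕ) : Ordinal.{0} :=
  Ordinal.omega0 * (n : Ordinal) + (k : Ordinal)



/-- The language consisting of a single unary predicate. -/
def unaryLang : FirstOrder.Language.{0, 0} :=
  ⟨fun _ => Empty, fun n => match n with | 1 => PUnit | _ => Empty⟩

/-- Interpret the unary predicate of `unaryLang` as membership in `H`. -/
def unaryStructure (H : Set M) : unaryLang.Structure M where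
  funMap := fun {_} f _ => Empty.elim f
  RelMap := fun {n} r v =>
    match n, r, v with
    | 1, _, v => v 0 ∈ H
    | 0, r, _ => Empty.elim r
    | (_ + 2), r, _ => Empty.elim r

/-- The language `L_H = L ∪ {H}`. -/
def LH (L : FirstOrder.Language.{u, v}) : FirstOrder.Language :=
  L.sum unaryLang

/-- The `L_H`-structure on `M` induced by the `L`-structure and the set `H`. -/
def hStructure (H : Set M) : (LH L).Structure M :=
  letI : unaryLang.Structure M := unaryStructure H
  inferInstanceAs ((L.sum unaryLang).Structure M)

/-- Realization of `L_H`-formulas in `(M, H)`. -/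
def RealizeH (H : Set M) {α : Type*} (φ : (LH L).Formula α) (v : α → M) : Prop :=
  letI := hStructure L H
  φ.Realize v

/-- `L_H`-definability over a parameter set, in `(M, H)`. -/
def DefinableH (H : Set M) {α : Type*} (A : Set M) (s : Set (α → M)) : Prop :=
  letI := hStructure L H
  Set.Definable A (LH L) s

/-- `acl` in the sense of `L_H` in `(M, H)`. -/
noncomputable def aclH (H : Set M) (A : Set M) : Set M :=
  letI := hStructure L H
  acl (LH L) A

/-- Equality of `L_H`-types over a parameter set, in `(M, H)`. -/
def SameTypeH (H : Set M) (A : Set M) {α : Type*} (a b : α → M) : Prop :=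
  letI := hStructure L H
  SameType (LH L) A a b


/-- `SU`-rank in the sense of `L_H`, computed in `(M, H)`. -/
noncomputable def SUH (H : Set M) {α' : Type*} (a : α' → M) (A : Set M) : Ordinal.{0} :=
  letI := hStructure L H
  SU (LH L) a A

/-- `SUge` in the sense of `L_H`, computed in `(M, H)`. -/
noncomputable def SUgeH (H : Set M) {α' : Type*} (a : α' → M) (o : Ordinal.{0})
    (A : Set M) : Prop :=
  letI := hStructure L H
  SUge (LH L) a o A

/-- The `L_H`-`SU`-rank of the set `X` over `A` equals `o` (and is attained). -/
def SUSetEqH (H : Set M) {α' : Type*} (X : Set (α' → M)) (A : Set M)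
    (o : Ordinal.{0}) : Prop :=
  letI := hStructure L H
  SUSetEq (LH L) X A o

/-- The `L_H`-`SU`-rank of the set `X` over `A` is less than `o`. -/
def SUSetLtH (H : Set M) {α' : Type*} (X : Set (α' → M)) (A : Set M)
    (o : Ordinal.{0}) : Prop :=
  letI := hStructure L H
  SUSetLt (LH L) X A o


/-- `(M, H)` is countably saturated as an `L_H`-structure. -/
def CountSaturatedH (H : Set M) : Prop :=
  letI := hStructure L H
  CountSaturated (LH L) M



section

open FirstOrder.Language

variable {L} {A S H : Set M}

theorem definable₁_of_finite (hS : S.Finite) : S.Definable₁ L S := by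
  have : Finite S := hS
  have hunion : {v : Fin 1 → M | v 0 ∈ S} = ⋃ a : S, {v | v 0 ∈ ({↑a} : Set M)} := by
    ext
    simp
  rw [Set.Definable₁, hunion]
  exact Set.definable_iUnion_of_finite fun a => Set.Definable.singleton_of_mem L a.2

theorem definable₁_image_snd {R : Set (M × M)} (hR : A.Definable₂ L R) :
    A.Definable₁ L (Prod.snd '' R) := by
  have hproj : {w : Fin 1 → M | w 0 ∈ Prod.snd '' R} =
      (fun v : Fin 2 → M => v ∘ fun _ : Fin 1 => 1) '' {v | (v 0, v 1) ∈ R} := by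
    ext w
    constructor
    · rintro ⟨⟨x, z⟩, hxz, hz⟩
      exact ⟨![x, z], hxz, funext fun i => by simpa [Subsingleton.elim i 0] using hz⟩
    · rintro ⟨v, hv, rfl⟩
      exact ⟨(v 0, v 1), hv, rfl⟩
  rw [Set.Definable₁, hproj]
  exact Set.Definable.image_comp hR fun _ => 1

theorem definable₂_realize_sumElim {β : Type*} [Finite β] (φ : L.Formula (Fin 2 ⊕ β))
    (c : β → M) : (Set.range c).Definable₂ L {p | φ.Realize (Sum.elim ![p.1, p.2] c)} := by
  have hφ : (Set.range c).Definable L {v : Fin 2 ⊕ β → M | φ.Realize v} :=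
    (Set.empty_definable_iff.2 ⟨φ, rfl⟩).mono (Set.empty_subset _)
  refine hφ.preimage_map (F := fun v : Fin 2 → M => Sum.elim ![v 0, v 1] c) ?_
  rintro (i | j)
  · fin_cases i <;> exact Set.DefinableFun.proj L
  · exact definableFun_const L (Fin 2) (Set.mem_range_self j)

theorem SameType.mem_iff {α : Type*} {a b : α → M} (h : SameType L A a b) {S : Set (α → M)}
    (hS : A.Definable L S) : a ∈ S ↔ b ∈ S := by
  obtain ⟨φ, rfl⟩ := hS
  exact h φ

theorem mem_acl_iff {x : M} : x ∈ acl L A ↔ ∃ S : Set M, A.Definable₁ L S ∧ S.Finite ∧ x ∈ S := by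
  constructor
  · rintro ⟨φ, hfin, hx⟩
    refine ⟨{y | φ.Realize fun _ => y}, ⟨φ, ?_⟩, hfin, hx⟩
    ext v
    exact iff_of_eq (congrArg φ.Realize (funext fun i => by rw [Subsingleton.elim i 0]))
  · rintro ⟨S, ⟨φ, hφ⟩, hfin, hx⟩
    have hφS (y : M) : φ.Realize (fun _ => y) ↔ y ∈ S := (Set.ext_iff.1 hφ fun _ => y).symm
    exact ⟨φ, hfin.subset fun y hy => (hφS y).1 hy, (hφS x).2 hx⟩

theorem subset_acl : A ⊆ acl L A := fun a ha =>
  mem_acl_iff.2 ⟨{a}, Set.Definable.singleton_of_mem L ha, Set.finite_singleton a, rfl⟩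

theorem CountSaturated.of_isExpansionOn {L' : FirstOrder.Language} [L'.Structure M] (f : L →ᴸ L')
    [f.IsExpansionOn M] (hsat : CountSaturated L' M) : CountSaturated L M := by
  classical
  intro A hA n Φ hΦ
  obtain ⟨a, ha⟩ := hsat A hA n ((f.addConstants A).onFormula '' Φ) fun F hF => by
    obtain ⟨G, hGΦ, rfl⟩ := Finset.subset_set_image_iff.1 hF
    simpa only [Finset.forall_mem_image, LHom.realize_onFormula] using hΦ G hGΦ
  exact ⟨a, by simpa only [Set.forall_mem_image, LHom.realize_onFormula] using ha⟩

theorem CountSaturatedH.countSaturated (hsat : CountSaturatedH L H) : CountSaturated L M := by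
  let : unaryLang.Structure M := unaryStructure H
  have hsum : CountSaturated (L.sum unaryLang) M := hsat
  exact hsum.of_isExpansionOn LHom.sumInl

theorem CountSaturated.exists_forall_mem_of_definable (hsat : CountSaturated L M)
    (hA : A.Countable) {n : ℕ} (l : Filter (Fin n → M)) [l.NeBot] :
    ∃ a : Fin n → M, ∀ S ∈ l, A.Definable L S → a ∈ S := by
  obtain ⟨a, ha⟩ := hsat A hA n {φ | ∀ᶠ x in l, φ.Realize x} fun F hF =>
    ((Filter.eventually_all_finset F).2 hF).exists
  refine ⟨a, ?_⟩
  rintro _ hS ⟨φ, rfl⟩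
  exact ha φ hS

open Filter in
theorem CountSaturated.exists_mem_notMem_acl (hsat : CountSaturated L M) (hA : A.Countable)
    (hS : A.Definable₁ L S) (hinf : S.Infinite) : ∃ z ∈ S, z ∉ acl L A := by
  have := hinf.cofinite_inf_principal_neBot
  obtain ⟨a, ha⟩ := hsat.exists_forall_mem_of_definable hA
    ((cofinite ⊓ 𝓟 S).map fun z (_ : Fin 1) => z)
  have haS : a 0 ∈ S := ha {v | v 0 ∈ S} (mem_inf_of_right (mem_principal_self S)) hS
  refine ⟨a 0, haS, fun hacl => ?_⟩
  obtain ⟨T, hT, hfin, haT⟩ := mem_acl_iff.1 hacl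
  exact ha {v | v 0 ∈ T}ᶜ (mem_inf_of_left hfin.compl_mem_cofinite) hT.compl haT

theorem DensityProp.inter_nonempty (hdense : DensityProp L H) (hsat : CountSaturated L M)
    (hS : A.Definable₁ L S) (hinf : S.Infinite) : (S ∩ H).Nonempty := by
  obtain ⟨B, -, hSB⟩ := Set.definable_iff_finitely_definable.1 hS
  obtain ⟨z, hzS, hz⟩ := hsat.exists_mem_notMem_acl B.countable_toSet hSB hinf
  obtain ⟨h, hhH, hsame⟩ := hdense B ⟨B, subset_acl⟩ z hz
  exact ⟨h, (hsame.mem_iff hSB).1 hzS, hhH⟩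

theorem statement5_general (hdense : DensityProp L H) (hsat : CountSaturated L M)
    {R : Set (M × M)} (hR : A.Definable₂ L R) (hfin : ∀ z : M, {x : M | (x, z) ∈ R}.Finite) :
    {x : M | ∃ z : M, (x, z) ∈ R}.Infinite ↔ {x : M | ∃ z ∈ H, (x, z) ∈ R}.Infinite := by
  refine ⟨fun hX hY => ?_, Set.Infinite.mono fun x ⟨z, _, hxz⟩ => ⟨z, hxz⟩⟩
  set Y : Set M := {x : M | ∃ z ∈ H, (x, z) ∈ R}
  let Z : Set M := Prod.snd '' (R \ Prod.fst ⁻¹' Y)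
  have hZdef : (A ∪ Y).Definable₁ L Z :=
    definable₁_image_snd <| (Set.Definable.mono hR Set.subset_union_left).sdiff <|
      (Set.Definable.mono (definable₁_of_finite hY) Set.subset_union_right).preimage_comp fun _ => 0
  have hZinf : Z.Infinite := by
    refine fun hZ => hX (((hZ.biUnion fun z _ => hfin z).union hY).subset ?_)
    rintro x ⟨z, hxz⟩
    by_cases hx : x ∈ Y
    · exact Or.inr hx
    · exact Or.inl (Set.mem_biUnion ⟨(x, z), ⟨hxz, hx⟩, rfl⟩ hxz)
  obtain ⟨_, ⟨⟨x, z⟩, ⟨hxz, hx⟩, rfl⟩, hzH⟩ := hdense.inter_nonempty hsat hZdef hZinf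
  exact hx ⟨z, hzH, hxz⟩

end

/-- (Claim 1 of Lemma 3.2.) In a sufficiently saturated `H`-structure, if
`φ(x, z, ā)` is algebraic in `x` for every value of `z`, then `∃z φ(x, z, ā)` is
non-algebraic iff `∃z ∈ H φ(x, z, ā)` is non-algebraic. -/
theorem statement5 {M : Type w} (L : FirstOrder.Language.{u, v}) [L.Structure M]
    (H : Set M) (hgeom : Geometric L M) (hH : IsHStructure L H)
    (hsat : CountSaturatedH L H)
    {r : ℕ} (φ : L.Formula (Fin 2 ⊕ Fin r)) (c : Fin r → M)
    (halg : ∀ z : M, {x : M | φ.Realize (Sum.elim ![x, z] c)}.Finite) :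
    {x : M | ∃ z : M, φ.Realize (Sum.elim ![x, z] c)}.Infinite ↔
      {x : M | ∃ z ∈ H, φ.Realize (Sum.elim ![x, z] c)}.Infinite := by
  exact statement5_general hH.1 hsat.countSaturated (definable₂_realize_sumElim φ c) halg

end HPaper
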